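/- Let (G,C) be a strongly connected inhomogeneous Mauldin–Williams graph in ℝ^d satisfying the SOSC such that ∫₀^∞ e^{−s₀(G)t} N_{e^{−t}}(C_i) dt < ∞ for all i ∈ V. If G_M = ℝ, then for every i ∈ V there exists a constant h_i > 0 such that lim_{t→∞} N_{e^{−t}}(K_i^C) / (h_i e^{s₀(G)t}) = 1. -/

import Mathlib

open Set Filter Topology MeasureTheory Metric

noncomputable section

/-- Points of `ℝ^d`. -/
abbrev Pt (d : ℕ) := EuclideanSpace ℝ (Fin d)

/-- The `r`-covering number of `A ⊆ ℝ^d`: the least number of closed balls of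
radius `r` needed to cover `A`. -/
noncomputable def coveringNumber {d : ℕ} (A : Set (Pt d)) (r : ℝ) : ℕ :=
  sInf {k : ℕ | ∃ c : Fin k → Pt d, A ⊆ ⋃ i, Metric.closedBall (c i) r}

/-- A Mauldin–Williams graph in `ℝ^d` over a finite directed multigraph with
vertex type `V` and edge type `E`: each vertex `i` carries a non-empty compact
set `X i` equal to the closure of its interior, and each edge `e` carries a
contractive similarity `S e` of ratio `r e ∈ (0,1)` mapping `X (term e)` into
`X (init e)`. -/
structure MWGraph (d : ℕ) (V E : Type) [Fintype V] [Fintype E] where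
  init : E → V
  term : E → V
  X : V → Set (Pt d)
  S : E → Pt d → Pt d
  r : E → ℝ
  X_nonempty : ∀ i, (X i).Nonempty
  X_compact : ∀ i, IsCompact (X i)
  X_regular : ∀ i, closure (interior (X i)) = X i
  r_pos : ∀ e, 0 < r e
  r_lt_one : ∀ e, r e < 1
  S_maps : ∀ e, Set.MapsTo (S e) (X (term e)) (X (init e))
  S_sim : ∀ e x y, dist (S e x) (S e y) = r e * dist x y

namespace MWGraph

variable {d : ℕ} {V E : Type} [Fintype V] [Fintype E]

variable (G : MWGraph d V E)

/-- `G.IsPathFrom j γ` holds iff the list of edges `γ` is a directed path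
starting at vertex `j`. -/
def IsPathFrom : V → List E → Prop
  | _, [] => True
  | j, e :: es => G.init e = j ∧ IsPathFrom (G.term e) es

/-- Terminal vertex of the path `γ` starting at `j`. -/
def pathTerm : V → List E → V
  | j, [] => j
  | _, e :: es => pathTerm (G.term e) es

/-- `S_γ = S_{e₁} ∘ ⋯ ∘ S_{eₙ}` (with `S_∅ = id`). -/
def pathMap : List E → Pt d → Pt d
  | [] => id
  | e :: es => G.S e ∘ pathMap es

/-- `r_γ = r_{e₁} ⋯ r_{eₙ}` (with `r_∅ = 1`). -/
def pathRatio (γ : List E) : ℝ := (γ.map G.r).prod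

/-- The underlying multigraph is strongly connected: for every ordered pair of
vertices there is a (non-empty) directed path from the first to the second. -/
def StronglyConnected : Prop :=
  ∀ i j : V, ∃ γ : List E, γ ≠ [] ∧ G.IsPathFrom i γ ∧ G.pathTerm i γ = j

/-- `K` is the list of graph-directed self-similar sets of `G`: the unique list
of non-empty compact sets with `K i = ⋃_{e ∈ E_i} S_e (K (term e))`. -/
def IsAttractor (K : V → Set (Pt d)) : Prop :=
  (∀ i, IsCompact (K i)) ∧ (∀ i, (K i).Nonempty) ∧
    ∀ i, K i = ⋃ e ∈ {e : E | G.init e = i}, G.S e '' K (G.term e)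

/-- `C` is an admissible list of condensation sets: compact subsets of the `X i`. -/
def IsCondensation (C : V → Set (Pt d)) : Prop :=
  ∀ i, IsCompact (C i) ∧ C i ⊆ G.X i

/-- `K` is the list of inhomogeneous graph-directed self-similar sets of `(G, C)`:
the unique list of non-empty compact sets with
`K i = ⋃_{e ∈ E_i} S_e (K (term e)) ∪ C i`. -/
def IsInhomAttractor (C : V → Set (Pt d)) (K : V → Set (Pt d)) : Prop :=
  (∀ i, IsCompact (K i)) ∧ (∀ i, (K i).Nonempty) ∧
    ∀ i, K i = (⋃ e ∈ {e : E | G.init e = i}, G.S e '' K (G.term e)) ∪ C i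

/-- `G` satisfies the open set condition with the open sets `U`. -/
def IsOSCWith (U : V → Set (Pt d)) : Prop :=
  (∀ i, (U i).Nonempty) ∧ (∀ i, IsOpen (U i)) ∧ (∀ i, Bornology.IsBounded (U i)) ∧
    (∀ i, U i ⊆ G.X i) ∧
    (∀ i, (⋃ e ∈ {e : E | G.init e = i}, G.S e '' U (G.term e)) ⊆ U i) ∧
    ∀ e e' : E, G.init e = G.init e' → e ≠ e' →
      Disjoint (G.S e '' U (G.term e)) (G.S e' '' U (G.term e'))

/-- The set `{-log r_γ : γ a directed cycle of G}`. -/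
def cycleSet : Set ℝ :=
  {x : ℝ | ∃ (j : V) (γ : List E), γ ≠ [] ∧ G.IsPathFrom j γ ∧ G.pathTerm j γ = j ∧
    x = -Real.log (G.pathRatio γ)}

/-- `G_M`, the smallest closed additive subgroup of `ℝ` containing
`{-log r_γ : γ a directed cycle}`. -/
def GM : Set ℝ := closure ((AddSubgroup.closure (G.cycleSet) : AddSubgroup ℝ) : Set ℝ)

variable [DecidableEq V]

/-- The matrix `A_G^s` with entries `(A_G^s)_{ij} = Σ_{e ∈ E_{ij}} r_e^s`. -/
def Amatrix (s : ℝ) : Matrix V V ℝ :=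
  Matrix.of fun i j => ∑ e : E, if G.init e = i ∧ G.term e = j then G.r e ^ s else 0

end MWGraph

/-- Spectral radius of a real square matrix: the largest modulus of a complex
eigenvalue. -/
noncomputable def matrixSpectralRadius {n : Type} [Fintype n] [DecidableEq n]
    (A : Matrix n n ℝ) : ℝ :=
  sSup {x : ℝ | ∃ μ : ℂ, μ ∈ spectrum ℂ (A.map (fun a : ℝ => (a : ℂ))) ∧ x = ‖μ‖}

/-- `s` is the (unique) exponent `s ≥ 0` with `ρ(A_G^s) = 1`, i.e. `s = s₀(G)`. -/
def IsS0 {d : ℕ} {V E : Type} [Fintype V] [Fintype E] [DecidableEq V]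
    (G : MWGraph d V E) (s : ℝ) : Prop :=
  0 ≤ s ∧ matrixSpectralRadius (G.Amatrix s) = 1

section CoveringNumber

variable {d : ℕ}

lemma coveringNumber_le_card {ι : Type} [Fintype ι] {A : Set (Pt d)} {r : ℝ} (c : ι → Pt d)
    (h : A ⊆ ⋃ i, closedBall (c i) r) : coveringNumber A r ≤ Fintype.card ι := by
  refine Nat.sInf_le ⟨c ∘ (Fintype.equivFin ι).symm, ?_⟩
  intro x hx
  obtain ⟨i, hi⟩ := mem_iUnion.1 (h hx)
  exact mem_iUnion.2 ⟨Fintype.equivFin ι i, by simpa using hi⟩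

lemma exists_cover {A : Set (Pt d)} (hA : IsCompact A) {r : ℝ} (hr : 0 < r) :
    ∃ c : Fin (coveringNumber A r) → Pt d, A ⊆ ⋃ i, closedBall (c i) r := by
  refine Nat.sInf_mem (s := {k : ℕ | ∃ c : Fin k → Pt d, A ⊆ ⋃ i, closedBall (c i) r}) ?_
  obtain ⟨t, -, ht, hcov⟩ := hA.finite_cover_balls hr
  have := ht.fintype
  refine ⟨Fintype.card t, fun k => ((Fintype.equivFin t).symm k : Pt d), ?_⟩
  intro x hx
  obtain ⟨y, hy, hxy⟩ := mem_iUnion₂.1 (hcov hx)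
  exact mem_iUnion.2 ⟨Fintype.equivFin t ⟨y, hy⟩, by simpa using ball_subset_closedBall hxy⟩

lemma coveringNumber_anti {A : Set (Pt d)} (hA : IsCompact A) {r r' : ℝ} (hr : 0 < r)
    (h : r ≤ r') : coveringNumber A r' ≤ coveringNumber A r := by
  obtain ⟨c, hc⟩ := exists_cover hA hr
  simpa using coveringNumber_le_card c
    (hc.trans (iUnion_mono fun i => closedBall_subset_closedBall h))

/-- A `2r`-separated finite subset has at most as many points as any cover by `r`-balls. -/
lemma card_le_coveringNumber {A : Set (Pt d)} (hA : IsCompact A) {r : ℝ} (hr : 0 < r)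
    (F : Finset (Pt d)) (hF : ∀ x ∈ F, x ∈ A)
    (hsep : ∀ x ∈ F, ∀ y ∈ F, x ≠ y → 2 * r < dist x y) : F.card ≤ coveringNumber A r := by
  obtain ⟨c, hc⟩ := exists_cover hA hr
  have hex : ∀ x : F, ∃ k, (x : Pt d) ∈ closedBall (c k) r :=
    fun x => mem_iUnion.1 (hc (hF x x.2))
  choose f hf using hex
  have hinj : Function.Injective f := by
    intro x y hxy
    by_contra hne
    have h1 := hsep x x.2 y y.2 (fun h => hne (Subtype.ext h))
    have h2 := mem_closedBall.1 (hf x)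
    have h3 := mem_closedBall.1 (hf y)
    rw [← hxy] at h3
    linarith [dist_triangle_right (x : Pt d) y (c (f x))]
  simpa using Fintype.card_le_of_injective f hinj

end CoveringNumber

namespace MWGraph

variable {d : ℕ} {V E : Type} [Fintype V] [Fintype E] (G : MWGraph d V E)

lemma coveringNumber_inhom_le [DecidableEq V] {C KC : V → Set (Pt d)} (hC : G.IsCondensation C)
    (hKC : G.IsInhomAttractor C KC) (i : V) {ρ : ℝ} (hρ : 0 < ρ) :
    coveringNumber (KC i) ρ ≤
      ∑ e with G.init e = i, coveringNumber (KC (G.term e)) (ρ / G.r e) +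
        coveringNumber (C i) ρ := by
  choose c hc using fun e : E =>
    exists_cover (hKC.1 (G.term e)) (div_pos hρ (G.r_pos e))
  obtain ⟨c', hc'⟩ := exists_cover (hC i).1 hρ
  have key := coveringNumber_le_card (A := KC i) (r := ρ)
    (ι := (Σ e : {e : E // G.init e = i},
      Fin (coveringNumber (KC (G.term e)) (ρ / G.r e))) ⊕ Fin (coveringNumber (C i) ρ))
    (Sum.elim (fun p => G.S p.1 (c p.1 p.2)) c') ?_
  · simp only [Fintype.card_sum, Fintype.card_sigma, Fintype.card_fin] at key
    refine key.trans (add_le_add_left (le_of_eq ?_) _)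
    exact (Finset.sum_subtype _ (by simp)
      fun e => coveringNumber (KC (G.term e)) (ρ / G.r e)).symm
  · rw [hKC.2.2 i]
    rintro x (hx | hx)
    · obtain ⟨e, he, y, hy, rfl⟩ := mem_iUnion₂.1 hx
      obtain ⟨k, hk⟩ := mem_iUnion.1 (hc e hy)
      refine mem_iUnion.2 ⟨Sum.inl ⟨⟨e, he⟩, k⟩, ?_⟩
      rw [mem_closedBall] at hk ⊢
      simp only [Sum.elim_inl, G.S_sim]
      have := G.r_pos e
      rwa [le_div_iff₀' this] at hk
    · obtain ⟨k, hk⟩ := mem_iUnion.1 (hc' hx)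
      exact mem_iUnion.2 ⟨Sum.inr k, hk⟩

end MWGraph

section PerronFrobenius

open scoped Matrix.Norms.Operator

variable {n : Type} [Fintype n]

lemma Matrix.mulVec_mono_of_nonneg {A : Matrix n n ℝ} (hA : ∀ i j, 0 ≤ A i j) {x y : n → ℝ}
    (h : ∀ i, x i ≤ y i) (i : n) : (A.mulVec x) i ≤ (A.mulVec y) i :=
  Finset.sum_le_sum fun j _ => mul_le_mul_of_nonneg_left (h j) (hA i j)

variable [DecidableEq n]

lemma Matrix.pow_apply_nonneg_of_nonneg {A : Matrix n n ℝ} (hA : ∀ i j, 0 ≤ A i j) (k : ℕ) :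
    ∀ i j, 0 ≤ (A ^ k) i j := by
  induction k with
  | zero =>
    intro i j
    rw [pow_zero, Matrix.one_apply]
    split_ifs <;> norm_num
  | succ k ih =>
    intro i j
    rw [pow_succ, Matrix.mul_apply]
    exact Finset.sum_nonneg fun l _ => mul_nonneg (ih i l) (hA l j)

lemma finite_norm_spectrum (A : Matrix n n ℝ) :
    {x : ℝ | ∃ μ : ℂ, μ ∈ spectrum ℂ (A.map (fun a : ℝ => (a : ℂ))) ∧ x = ‖μ‖}.Finite := by
  refine ((Matrix.finite_spectrum (A.map (fun a : ℝ => (a : ℂ)))).image norm).subset ?_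
  rintro x ⟨μ, hμ, rfl⟩
  exact ⟨μ, hμ, rfl⟩

/-- A non-negative matrix expanding some non-zero non-negative vector by the factor `a` has
spectral radius at least `a`. -/
lemma le_matrixSpectralRadius_of_smul_le_mulVec {A : Matrix n n ℝ} (hA : ∀ i j, 0 ≤ A i j)
    {y : n → ℝ} (hy : ∀ i, 0 ≤ y i) (hy0 : y ≠ 0) {a : ℝ} (ha : 0 ≤ a)
    (h : ∀ i, a * y i ≤ (A.mulVec y) i) : a ≤ matrixSpectralRadius A := by
  have : Nonempty n := by
    obtain ⟨i, -⟩ := Function.ne_iff.1 hy0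
    exact ⟨i⟩
  set B : Matrix n n ℂ := A.map (fun a : ℝ => (a : ℂ)) with hB
  have hpow : ∀ k i, a ^ k * y i ≤ ((A ^ k).mulVec y) i := by
    intro k
    induction k with
    | zero => intro i; simp
    | succ k ih =>
      intro i
      rw [pow_succ', pow_succ', ← Matrix.mulVec_mulVec]
      calc a * a ^ k * y i = a ^ k * (a * y i) := by ring
        _ ≤ a ^ k * (A.mulVec y) i := mul_le_mul_of_nonneg_left (h i) (by positivity)
        _ = (A.mulVec fun j => a ^ k * y j) i := by
            simp only [Matrix.mulVec, dotProduct, Finset.mul_sum]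
            exact Finset.sum_congr rfl fun j _ => by ring
        _ ≤ _ := Matrix.mulVec_mono_of_nonneg hA ih i
  have hBpow : ∀ k, B ^ k = (A ^ k).map (fun a : ℝ => (a : ℂ)) := fun k =>
    (Matrix.map_pow A Complex.ofRealHom k).symm
  have hnorm : ∀ k, a ^ k ≤ ‖B ^ k‖ := by
    intro k
    set w : n → ℂ := fun i => (y i : ℂ) with hw
    have hwpos : 0 < ‖w‖ := by
      rw [norm_pos_iff]
      intro h0
      apply hy0
      funext i
      have := congrFun h0 i
      simpa [hw] using this
    have h1 : a ^ k * ‖w‖ ≤ ‖(B ^ k).mulVec w‖ := by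
      obtain ⟨i, hi⟩ : ∃ i, ‖w‖ = ‖w i‖ := by
        obtain ⟨i, -, hi⟩ := Finset.exists_max_image Finset.univ (fun i => ‖w i‖)
          Finset.univ_nonempty
        refine ⟨i, le_antisymm ?_ (norm_le_pi_norm w i)⟩
        exact (pi_norm_le_iff_of_nonneg (norm_nonneg _)).2 fun j => hi j (Finset.mem_univ j)
      refine le_trans ?_ (norm_le_pi_norm _ i)
      have h2 : ((B ^ k).mulVec w) i = (((A ^ k).mulVec y) i : ℝ) := by
        rw [hBpow]
        simp [Matrix.mulVec, dotProduct, hw]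
      rw [h2, hi, hw]
      simp only [Complex.norm_real, Real.norm_eq_abs]
      rw [abs_of_nonneg (hy i)]
      exact (hpow k i).trans (le_abs_self _)
    have h3 := h1.trans (Matrix.linfty_opNorm_mulVec (B ^ k) w)
    exact le_of_mul_le_mul_right h3 hwpos
  have hlim := spectrum.pow_norm_pow_one_div_tendsto_nhds_spectralRadius B
  have hle : ENNReal.ofReal a ≤ spectralRadius ℂ B := by
    refine ge_of_tendsto hlim ?_
    filter_upwards [eventually_gt_atTop 0] with k hk
    refine ENNReal.ofReal_le_ofReal ?_
    calc a = (a ^ k) ^ (1 / k : ℝ) := by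
          rw [one_div, Real.pow_rpow_inv_natCast ha hk.ne']
      _ ≤ _ := Real.rpow_le_rpow (by positivity) (hnorm k) (by positivity)
  obtain ⟨z, hz, hzr⟩ := spectrum.exists_nnnorm_eq_spectralRadius B
  rw [← hzr] at hle
  have hza : a ≤ ‖z‖ := by
    have : ENNReal.ofReal a ≤ ENNReal.ofReal ‖z‖ := by
      simpa [ofReal_norm, enorm_eq_nnnorm] using hle
    exact (ENNReal.ofReal_le_ofReal_iff (norm_nonneg z)).1 this
  exact hza.trans (le_csSup (finite_norm_spectrum A).bddAbove ⟨z, hz, rfl⟩)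

lemma pos_of_mulVec_eq_self {A : Matrix n n ℝ} (hA : ∀ i j, 0 ≤ A i j)
    (hirr : ∀ i j, ∃ k, 0 < (A ^ k) i j) {x : n → ℝ} (hx : ∀ i, 0 ≤ x i) (hx0 : x ≠ 0)
    (h : A.mulVec x = x) (i : n) : 0 < x i := by
  obtain ⟨j, hj⟩ := Function.ne_iff.1 hx0
  have hj : 0 < x j := lt_of_le_of_ne (hx j) (Ne.symm hj)
  obtain ⟨k, hk⟩ := hirr i j
  have hpow : ∀ k, (A ^ k).mulVec x = x := by
    intro k
    induction k with
    | zero => simp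
    | succ k ih => rw [pow_succ, ← Matrix.mulVec_mulVec, h, ih]
  rw [← hpow k]
  exact (mul_pos hk hj).trans_le (Finset.single_le_sum (f := fun j => (A ^ k) i j * x j)
    (fun l _ => mul_nonneg (Matrix.pow_apply_nonneg_of_nonneg hA k i l) (hx l))
    (Finset.mem_univ j))

lemma exists_pos_right_eigenvector {A : Matrix n n ℝ} (hA : ∀ i j, 0 ≤ A i j)
    (hirr : ∀ i j, ∃ k, 0 < (A ^ k) i j) (hρ : matrixSpectralRadius A = 1) :
    ∃ u : n → ℝ, (∀ i, 0 < u i) ∧ A.mulVec u = u := by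
  obtain ⟨μ, hμ, hμ1⟩ : ∃ μ : ℂ, μ ∈ spectrum ℂ (A.map (fun a : ℝ => (a : ℂ))) ∧ 1 = ‖μ‖ := by
    have hne : {x : ℝ | ∃ μ : ℂ, μ ∈ spectrum ℂ (A.map (fun a : ℝ => (a : ℂ))) ∧
        x = ‖μ‖}.Nonempty := by
      by_contra hempty
      rw [not_nonempty_iff_eq_empty] at hempty
      rw [matrixSpectralRadius, hempty, Real.sSup_empty] at hρ
      exact zero_ne_one hρ
    have := hne.csSup_mem (finite_norm_spectrum A)
    rw [matrixSpectralRadius] at hρ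
    rwa [hρ] at this
  obtain ⟨v, hv0, hv⟩ : ∃ v ≠ 0, (A.map (fun a : ℝ => (a : ℂ))).mulVec v = μ • v := by
    rw [spectrum.mem_iff, Matrix.isUnit_iff_isUnit_det, isUnit_iff_ne_zero, not_not,
      ← Matrix.exists_mulVec_eq_zero_iff] at hμ
    obtain ⟨v, hv0, hv⟩ := hμ
    refine ⟨v, hv0, ?_⟩
    rw [Matrix.sub_mulVec, sub_eq_zero, Algebra.algebraMap_eq_smul_one, Matrix.smul_mulVec,
      Matrix.one_mulVec] at hv
    exact hv.symm
  set x : n → ℝ := fun i => ‖v i‖ with hx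
  have hxn : ∀ i, 0 ≤ x i := fun i => norm_nonneg _
  have hx0 : x ≠ 0 := by
    intro h
    apply hv0
    funext i
    simpa [hx] using congrFun h i
  have hxA : ∀ i, x i ≤ (A.mulVec x) i := by
    intro i
    have h1 := congrFun hv i
    have h2 : x i = ‖(μ • v) i‖ := by simp [hx, ← hμ1]
    rw [h2, ← h1]
    refine (norm_sum_le _ _).trans (Finset.sum_le_sum fun j _ => ?_)
    simp [hx, abs_of_nonneg (hA i j)]
  have hfix : A.mulVec x = x := by
    by_contra hne
    choose k hk using hirr
    set B : Matrix n n ℝ := ∑ p : n × n, A ^ k p.1 p.2 with hBdef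
    have hBpos : ∀ i j, 0 < B i j := by
      intro i j
      rw [hBdef, Matrix.sum_apply]
      exact (hk i j).trans_le (Finset.single_le_sum (f := fun p : n × n => (A ^ k p.1 p.2) i j)
        (fun p _ => Matrix.pow_apply_nonneg_of_nonneg hA _ i j) (Finset.mem_univ (i, j)))
    have hcomm : A * B = B * A := by
      rw [hBdef, Finset.mul_sum, Finset.sum_mul]
      exact Finset.sum_congr rfl fun p _ => by rw [← pow_succ, ← pow_succ']
    have hBv : ∀ z : n → ℝ, (∀ i, 0 ≤ z i) → z ≠ 0 → ∀ i, 0 < (B.mulVec z) i := by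
      intro z hz hz0 i
      obtain ⟨j, hj⟩ := Function.ne_iff.1 hz0
      have hj : 0 < z j := lt_of_le_of_ne (hz j) (Ne.symm hj)
      exact (mul_pos (hBpos i j) hj).trans_le (Finset.single_le_sum
        (f := fun j => B i j * z j) (fun l _ => mul_nonneg (hBpos i l).le (hz l))
        (Finset.mem_univ j))
    set y := B.mulVec x with hy
    have hypos := hBv x hxn hx0
    have hgap : ∀ i, 0 < (A.mulVec y) i - y i := by
      intro i
      have := hBv (A.mulVec x - x) (fun i => sub_nonneg.2 (hxA i)) (sub_ne_zero.2 hne) i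
      rw [Matrix.mulVec_sub, Matrix.mulVec_mulVec, ← hcomm, ← Matrix.mulVec_mulVec] at this
      exact this
    obtain ⟨i0, -⟩ := Function.ne_iff.1 hx0
    obtain ⟨m, -, hm⟩ := Finset.exists_min_image Finset.univ
      (fun i => ((A.mulVec y) i - y i) / y i) ⟨i0, Finset.mem_univ i0⟩
    set ε := ((A.mulVec y) m - y m) / y m with hε
    have hεpos : 0 < ε := div_pos (hgap m) (hypos m)
    have := le_matrixSpectralRadius_of_smul_le_mulVec hA (fun i => (hypos i).le)
      (fun h => (hypos i0).ne' (congrFun h i0)) (a := 1 + ε) (by positivity) (fun i => by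
        have h1 := hm i (Finset.mem_univ i)
        rw [le_div_iff₀ (hypos i)] at h1
        linarith)
    rw [hρ] at this
    linarith
  exact ⟨x, pos_of_mulVec_eq_self hA hirr hxn hx0 hfix, hfix⟩

lemma exists_pos_left_eigenvector {A : Matrix n n ℝ} (hA : ∀ i j, 0 ≤ A i j) [Nonempty n]
    (hirr : ∀ i j, ∃ k, 0 < (A ^ k) i j) {u : n → ℝ} (hu : ∀ i, 0 < u i)
    (hAu : A.mulVec u = u) : ∃ v : n → ℝ, (∀ i, 0 < v i) ∧ A.vecMul v = v := by
  have hdet : (A - 1).det = 0 := by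
    rw [← Matrix.exists_mulVec_eq_zero_iff]
    refine ⟨u, fun h => ?_, by rw [Matrix.sub_mulVec, hAu, Matrix.one_mulVec, sub_self]⟩
    obtain ⟨i⟩ := ‹Nonempty n›
    exact (hu i).ne' (congrFun h i)
  obtain ⟨w, hw0, hw⟩ := Matrix.exists_vecMul_eq_zero_iff.2 hdet
  rw [Matrix.vecMul_sub, Matrix.vecMul_one, sub_eq_zero] at hw
  set v : n → ℝ := fun i => |w i| with hv
  have hvA : ∀ i, v i ≤ (Matrix.vecMul v A) i := by
    intro i
    have h1 := congrFun hw i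
    simp only [hv]
    rw [← h1]
    refine (Finset.abs_sum_le_sum_abs _ _).trans (Finset.sum_le_sum fun j _ => ?_)
    rw [abs_mul, abs_of_nonneg (hA j i)]
  have hsum : ∑ i, ((Matrix.vecMul v A) i - v i) * u i = 0 := by
    have h1 : (Matrix.vecMul v A) ⬝ᵥ u = v ⬝ᵥ u := by
      rw [← Matrix.dotProduct_mulVec, hAu]
    simp only [sub_mul, Finset.sum_sub_distrib]
    exact sub_eq_zero.2 h1
  have hfix : Matrix.vecMul v A = v := by
    funext i
    have := (Finset.sum_eq_zero_iff_of_nonneg fun i _ =>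
      mul_nonneg (sub_nonneg.2 (hvA i)) (hu i).le).1 hsum i (Finset.mem_univ i)
    rcases mul_eq_zero.1 this with h | h
    · exact sub_eq_zero.1 h
    · exact absurd h (hu i).ne'
  refine ⟨v, pos_of_mulVec_eq_self (A := A.transpose) (fun i j => hA j i) ?_
    (fun i => abs_nonneg _) ?_ (by rw [Matrix.mulVec_transpose, hfix]), hfix⟩
  · intro i j
    obtain ⟨k, hk⟩ := hirr j i
    exact ⟨k, by rwa [← Matrix.transpose_pow, Matrix.transpose_apply]⟩
  · intro h
    apply hw0
    funext i
    simpa [hv] using congrFun h i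

end PerronFrobenius

/-- A submonoid of `[0, ∞)` generating a dense subgroup of `ℝ` becomes arbitrarily dense far
out. -/
lemma AddSubmonoid.exists_mem_Icc_of_dense (S : AddSubmonoid ℝ) (hnn : ∀ x ∈ S, 0 ≤ x)
    {c : ℝ} (hcS : c ∈ S) (hc : 0 < c)
    (hd : Dense (AddSubgroup.closure (S : Set ℝ) : Set ℝ)) {ε : ℝ} (hε : 0 < ε) :
    ∃ R : ℝ, 0 ≤ R ∧ ∀ x, R ≤ x → ∃ s ∈ S, x ≤ s ∧ s ≤ x + ε := by
  have hdiff : ∀ x ∈ AddSubgroup.closure (S : Set ℝ), ∃ a ∈ S, ∃ b ∈ S, x = a - b := by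
    intro x hx
    induction hx using AddSubgroup.closure_induction with
    | mem x hx => exact ⟨x, hx, 0, S.zero_mem, by simp⟩
    | zero => exact ⟨0, S.zero_mem, 0, S.zero_mem, by simp⟩
    | add x y _ _ hx hy =>
      obtain ⟨a, ha, b, hb, rfl⟩ := hx
      obtain ⟨a', ha', b', hb', rfl⟩ := hy
      exact ⟨a + a', S.add_mem ha ha', b + b', S.add_mem hb hb', by ring⟩
    | neg x _ hx =>
      obtain ⟨a, ha, b, hb, rfl⟩ := hx
      exact ⟨b, hb, a, ha, by ring⟩
  obtain ⟨g, hgS, hg0, hgε⟩ := hd.exists_between hε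
  obtain ⟨a', ha', b', hb', rfl⟩ := hdiff g hgS
  obtain ⟨a, ha, b, hb, hbpos, hab⟩ : ∃ a ∈ S, ∃ b ∈ S, 0 < b ∧ a' - b' = a - b :=
    ⟨a' + c, S.add_mem ha' hcS, b' + c, S.add_mem hb' hcS, by linarith [hnn b' hb'], by ring⟩
  rw [hab] at hg0 hgε
  set g := a - b with hg
  set m := ⌈b / g⌉₊ with hm
  refine ⟨m * b, by positivity, fun x hx => ?_⟩
  have hx0 : 0 ≤ x := le_trans (by positivity) hx
  set n := ⌊x / b⌋₊ with hn
  have hn1 : n * b ≤ x := by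
    have := Nat.floor_le (div_nonneg hx0 hbpos.le)
    rwa [← hn, le_div_iff₀ hbpos] at this
  have hn2 : x < n * b + b := by
    have := Nat.lt_floor_add_one (x / b)
    rw [← hn, div_lt_iff₀ hbpos] at this
    linarith
  have hmn : m ≤ n := Nat.le_floor (by rwa [le_div_iff₀ hbpos])
  set k := ⌈(x - n * b) / g⌉₊ with hk
  have hkm : k ≤ m := Nat.ceil_mono (by gcongr; linarith)
  have hk1 : x - n * b ≤ k * g := by
    have := Nat.le_ceil ((x - n * b) / g)
    rwa [← hk, div_le_iff₀ hg0] at this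
  have hk2 : k * g ≤ x - n * b + g := by
    have := (Nat.ceil_lt_add_one (div_nonneg (sub_nonneg.2 hn1) hg0.le)).le
    rw [← hk] at this
    calc k * g ≤ ((x - n * b) / g + 1) * g := by gcongr
      _ = x - n * b + g := by field_simp
  obtain ⟨q, hq⟩ := Nat.exists_eq_add_of_le (hkm.trans hmn)
  have hs : q • b + k • a = n * b + k * g := by
    rw [hq, hg]
    simp only [nsmul_eq_mul]
    push_cast
    ring
  refine ⟨q • b + k • a, S.add_mem (S.nsmul_mem hb q) (S.nsmul_mem ha k), ?_, ?_⟩ <;>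
    rw [hs] <;> linarith

namespace MWGraph

variable {d : ℕ} {V E : Type} [Fintype V] [Fintype E] (G : MWGraph d V E)

/-- The logarithmic length `-log r_γ` of a path `γ`. -/
def pathLength (γ : List E) : ℝ := -Real.log (G.pathRatio γ)

lemma pathRatio_pos (γ : List E) : 0 < G.pathRatio γ := by
  refine List.prod_pos fun x hx => ?_
  obtain ⟨e, -, rfl⟩ := List.mem_map.1 hx
  exact G.r_pos e

lemma neg_log_r_pos (e : E) : 0 < -Real.log (G.r e) :=
  neg_pos.2 (Real.log_neg (G.r_pos e) (G.r_lt_one e))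

@[simp] lemma pathLength_nil : G.pathLength [] = 0 := by
  simp [pathLength, pathRatio]

lemma pathLength_append (γ γ' : List E) :
    G.pathLength (γ ++ γ') = G.pathLength γ + G.pathLength γ' := by
  have h : G.pathRatio (γ ++ γ') = G.pathRatio γ * G.pathRatio γ' := by
    simp [pathRatio]
  rw [pathLength, h, Real.log_mul (G.pathRatio_pos γ).ne' (G.pathRatio_pos γ').ne', neg_add]
  rfl

lemma pathLength_cons (e : E) (γ : List E) :
    G.pathLength (e :: γ) = -Real.log (G.r e) + G.pathLength γ := by
  have := G.pathLength_append [e] γ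
  simpa [pathLength, pathRatio] using this

lemma pathLength_nonneg (γ : List E) : 0 ≤ G.pathLength γ := by
  induction γ with
  | nil => simp
  | cons e γ ih =>
    rw [pathLength_cons]
    linarith [G.neg_log_r_pos e]

lemma pathLength_pos {γ : List E} (h : γ ≠ []) : 0 < G.pathLength γ := by
  obtain ⟨e, γ', rfl⟩ := List.exists_cons_of_ne_nil h
  rw [pathLength_cons]
  linarith [G.neg_log_r_pos e, G.pathLength_nonneg γ']

lemma pathTerm_append (γ γ' : List E) : ∀ i : V,
    G.pathTerm i (γ ++ γ') = G.pathTerm (G.pathTerm i γ) γ' := by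
  induction γ with
  | nil => intro i; rfl
  | cons e γ ih => intro i; exact ih (G.term e)

lemma isPathFrom_append {γ γ' : List E} : ∀ {i : V}, G.IsPathFrom i γ →
    G.IsPathFrom (G.pathTerm i γ) γ' → G.IsPathFrom i (γ ++ γ') := by
  induction γ with
  | nil => intro i _ h; exact h
  | cons e γ ih => intro i h h'; exact ⟨h.1, ih h.2 h'⟩

/-- The lengths of closed paths based at `i`, the empty path included. -/
def cycleLengths (i : V) : AddSubmonoid ℝ where
  carrier := {x | ∃ γ : List E, G.IsPathFrom i γ ∧ G.pathTerm i γ = i ∧ G.pathLength γ = x}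
  zero_mem' := ⟨[], trivial, rfl, G.pathLength_nil⟩
  add_mem' := by
    rintro x y ⟨γ, h1, h2, rfl⟩ ⟨γ', h1', h2', rfl⟩
    exact ⟨γ ++ γ', G.isPathFrom_append h1 (by rwa [h2]), by rw [pathTerm_append, h2, h2'],
      G.pathLength_append γ γ'⟩

lemma dense_closure_cycleLengths (hSC : G.StronglyConnected) (hGM : G.GM = Set.univ) (i : V) :
    Dense (AddSubgroup.closure (G.cycleLengths i : Set ℝ) : Set ℝ) := by
  have hd : Dense (AddSubgroup.closure G.cycleSet : Set ℝ) := dense_iff_closure_eq.2 hGM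
  refine hd.mono ((AddSubgroup.closure_le _).2 ?_)
  rintro x ⟨j, γ, -, h1, h2, rfl⟩
  obtain ⟨α, -, hα1, hα2⟩ := hSC i j
  obtain ⟨β, -, hβ1, hβ2⟩ := hSC j i
  have hlong : G.pathLength α + (G.pathLength γ + G.pathLength β) ∈ G.cycleLengths i := by
    refine ⟨α ++ (γ ++ β), G.isPathFrom_append hα1 ?_, ?_, by simp only [pathLength_append]⟩
    · rw [hα2]
      exact G.isPathFrom_append h1 (by rwa [h2])
    · rw [pathTerm_append, pathTerm_append, hα2, h2, hβ2]
  have hshort : G.pathLength α + G.pathLength β ∈ G.cycleLengths i :=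
    ⟨α ++ β, G.isPathFrom_append hα1 (by rwa [hα2]), by rw [pathTerm_append, hα2, hβ2],
      G.pathLength_append α β⟩
  have := AddSubgroup.sub_mem _ (AddSubgroup.subset_closure (SetLike.mem_coe.2 hlong))
    (AddSubgroup.subset_closure (SetLike.mem_coe.2 hshort))
  have hγ : -Real.log (G.pathRatio γ) = G.pathLength α + (G.pathLength γ + G.pathLength β) -
      (G.pathLength α + G.pathLength β) := by
    change G.pathLength γ = _
    ring
  rw [hγ]
  exact this

lemma exists_path_pathLength_mem_Icc (hSC : G.StronglyConnected) (hGM : G.GM = Set.univ)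
    (i j : V) {ε : ℝ} (hε : 0 < ε) : ∃ R : ℝ, ∀ x, R ≤ x → ∃ γ : List E,
      G.IsPathFrom i γ ∧ G.pathTerm i γ = j ∧ x ≤ G.pathLength γ ∧ G.pathLength γ ≤ x + ε := by
  obtain ⟨c, hc0, hc1, hc2⟩ := hSC i i
  obtain ⟨β, -, hβ1, hβ2⟩ := hSC i j
  obtain ⟨R, -, hR⟩ := (G.cycleLengths i).exists_mem_Icc_of_dense
    (by rintro x ⟨γ, -, -, rfl⟩; exact G.pathLength_nonneg γ)
    ⟨c, hc1, hc2, rfl⟩ (G.pathLength_pos hc0) (G.dense_closure_cycleLengths hSC hGM i) hε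
  refine ⟨R + G.pathLength β, fun x hx => ?_⟩
  obtain ⟨s, ⟨γ, h1, h2, rfl⟩, hs1, hs2⟩ := hR (x - G.pathLength β) (by linarith)
  refine ⟨γ ++ β, G.isPathFrom_append h1 (by rwa [h2]), by rw [pathTerm_append, h2, hβ2], ?_, ?_⟩
    <;> rw [pathLength_append] <;> linarith

lemma exists_term_eq (hSC : G.StronglyConnected) (j : V) :
    ∃ e, G.term e = j := by
  obtain ⟨γ, hγ, -, h⟩ := hSC j j
  have key : ∀ (γ : List E) (i : V), γ ≠ [] → ∃ e, G.term e = G.pathTerm i γ := by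
    intro γ
    induction γ with
    | nil => intro i h; exact absurd rfl h
    | cons e γ ih =>
      intro i _
      rcases eq_or_ne γ [] with rfl | hne
      · exact ⟨e, rfl⟩
      · exact ih _ hne
  rw [← h]
  exact key γ j hγ

variable [DecidableEq V]

lemma Amatrix_nonneg (s : ℝ) (i j : V) : 0 ≤ G.Amatrix s i j := by
  refine Finset.sum_nonneg fun e _ => ?_
  split_ifs
  · exact (Real.rpow_pos_of_pos (G.r_pos e) s).le
  · exact le_rfl

lemma Amatrix_pow_length_pos (s : ℝ) (γ : List E) : ∀ i, G.IsPathFrom i γ →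
    0 < (G.Amatrix s ^ γ.length) i (G.pathTerm i γ) := by
  induction γ with
  | nil => intro i _; simp [pathTerm]
  | cons e γ ih =>
    rintro i ⟨rfl, h⟩
    have hA := G.Amatrix_nonneg s
    have he : 0 < G.Amatrix s (G.init e) (G.term e) := by
      refine Finset.sum_pos' (fun e' _ => ?_) ⟨e, Finset.mem_univ e, ?_⟩
      · split_ifs
        · exact (Real.rpow_pos_of_pos (G.r_pos e') s).le
        · exact le_rfl
      · simpa using Real.rpow_pos_of_pos (G.r_pos e) s
    rw [List.length_cons, pow_succ', Matrix.mul_apply]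
    exact (mul_pos he (ih _ h)).trans_le (Finset.single_le_sum
      (f := fun l => G.Amatrix s (G.init e) l * (G.Amatrix s ^ γ.length) l _)
      (fun l _ => mul_nonneg (hA _ l) (Matrix.pow_apply_nonneg_of_nonneg hA _ l _))
      (Finset.mem_univ (G.term e)))

lemma exists_Amatrix_pow_pos (hSC : G.StronglyConnected) (s : ℝ) (i j : V) :
    ∃ k, 0 < (G.Amatrix s ^ k) i j := by
  obtain ⟨γ, -, h, rfl⟩ := hSC i j
  exact ⟨γ.length, G.Amatrix_pow_length_pos s γ i h⟩

end MWGraph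

namespace MWGraph

variable {d : ℕ} {V E : Type} [Fintype V] [Fintype E] [DecidableEq V]

/-- The functions `Z i` satisfy a system of renewal inequalities along the edges of `G` with
delays `-log r_e`, with respect to a positive balanced flow `w` on the edges, and with
integrable error terms `g i`. The monotonicity condition says that the `Z i` cannot decrease
faster than `e^{-st}`. -/
structure IsSubrenewal (G : MWGraph d V E) (s : ℝ) (w : E → ℝ) (m : V → ℝ)
    (Z g : V → ℝ → ℝ) : Prop where
  s_nonneg : 0 ≤ s
  w_pos : ∀ e, 0 < w e
  sum_out : ∀ i, ∑ e with G.init e = i, w e = m i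
  sum_in : ∀ i, ∑ e with G.term e = i, w e = m i
  nonneg : ∀ i t, 0 ≤ Z i t
  mono : ∀ i, Monotone fun t => Real.exp (s * t) * Z i t
  le : ∀ i t, m i * Z i t ≤
    ∑ e with G.init e = i, w e * Z (G.term e) (t - -Real.log (G.r e)) + g i t
  g_nonneg : ∀ i t, 0 ≤ g i t
  g_integrable : ∀ i, IntegrableOn (g i) (Ioi 0)
  g_tendsto : ∀ i, Tendsto (g i) atTop (𝓝 0)

/-- The flux through time `t`, a quantity that is conserved up to the error terms. -/
def flux (G : MWGraph d V E) (w : E → ℝ) (Z : V → ℝ → ℝ) (t : ℝ) : ℝ :=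
  ∑ e, w e * ∫ τ in (t - -Real.log (G.r e))..t, Z (G.term e) τ

namespace IsSubrenewal

variable {G : MWGraph d V E} {s : ℝ} {w : E → ℝ} {m : V → ℝ} {Z g : V → ℝ → ℝ}

lemma exp_mul_le (h : G.IsSubrenewal s w m Z g) (i : V) {t t' : ℝ} (htt : t ≤ t') :
    Real.exp (-(s * (t' - t))) * Z i t ≤ Z i t' := by
  have h1 : Real.exp (s * t) * Z i t ≤ Real.exp (s * t') * Z i t' := h.mono i htt
  have h2 : Real.exp (-(s * (t' - t))) = Real.exp (-(s * t')) * Real.exp (s * t) := by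
    rw [← Real.exp_add]
    congr 1
    ring
  calc Real.exp (-(s * (t' - t))) * Z i t
      = Real.exp (-(s * t')) * (Real.exp (s * t) * Z i t) := by rw [h2]; ring
    _ ≤ Real.exp (-(s * t')) * (Real.exp (s * t') * Z i t') := by gcongr
    _ = Z i t' := by rw [← mul_assoc, ← Real.exp_add]; simp

lemma exp_mul_le_of_le (h : G.IsSubrenewal s w m Z g) (i : V) {t t' b : ℝ} (htt : t ≤ t')
    (hb : t' ≤ t + b) : Real.exp (-(s * b)) * Z i t ≤ Z i t' := by
  refine le_trans (mul_le_mul_of_nonneg_right (Real.exp_le_exp.2 ?_) (h.nonneg i t))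
    (h.exp_mul_le i htt)
  exact neg_le_neg (mul_le_mul_of_nonneg_left (by linarith) h.s_nonneg)

lemma intervalIntegrable (h : G.IsSubrenewal s w m Z g) (i : V) (a b : ℝ) :
    IntervalIntegrable (Z i) volume a b := by
  have h1 : Z i = fun t => Real.exp (-(s * t)) * (Real.exp (s * t) * Z i t) := by
    funext t
    rw [← mul_assoc, ← Real.exp_add]
    simp
  rw [h1]
  exact ((h.mono i).intervalIntegrable).continuousOn_mul (by fun_prop)

lemma integral_nonneg (h : G.IsSubrenewal s w m Z g) (e : E) (t : ℝ) :
    0 ≤ ∫ τ in (t - -Real.log (G.r e))..t, Z (G.term e) τ :=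
  intervalIntegral.integral_nonneg (by linarith [G.neg_log_r_pos e]) fun τ _ => h.nonneg _ τ

lemma flux_nonneg (h : G.IsSubrenewal s w m Z g) (t : ℝ) : 0 ≤ G.flux w Z t :=
  Finset.sum_nonneg fun e _ => mul_nonneg (h.w_pos e).le (h.integral_nonneg e t)

lemma sum_sub_le (h : G.IsSubrenewal s w m Z g) (t : ℝ) :
    ∑ e, w e * (Z (G.term e) t - Z (G.term e) (t - -Real.log (G.r e))) ≤ ∑ i, g i t := by
  have h1 : ∑ e, w e * Z (G.term e) t = ∑ i, m i * Z i t := by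
    rw [← Finset.sum_fiberwise Finset.univ G.term]
    refine Finset.sum_congr rfl fun i _ => ?_
    rw [← h.sum_in i, Finset.sum_mul]
    refine Finset.sum_congr rfl fun e he => ?_
    rw [(Finset.mem_filter.1 he).2]
  have h2 : ∑ e, w e * Z (G.term e) (t - -Real.log (G.r e)) =
      ∑ i, ∑ e with G.init e = i, w e * Z (G.term e) (t - -Real.log (G.r e)) :=
    (Finset.sum_fiberwise Finset.univ G.init _).symm
  simp only [mul_sub, Finset.sum_sub_distrib]
  rw [h1, h2, ← Finset.sum_sub_distrib]
  exact Finset.sum_le_sum fun i _ => by linarith [h.le i t]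

lemma integrableOn_sum (h : G.IsSubrenewal s w m Z g) :
    IntegrableOn (fun t => ∑ i, g i t) (Ioi 0) :=
  integrable_finsetSum _ fun i _ => h.g_integrable i

lemma intervalIntegrable_sum (h : G.IsSubrenewal s w m Z g) {a b : ℝ} (ha : 0 ≤ a)
    (hab : a ≤ b) : IntervalIntegrable (fun t => ∑ i, g i t) volume a b := by
  rw [intervalIntegrable_iff_integrableOn_Ioc_of_le hab]
  exact h.integrableOn_sum.mono_set fun x hx => lt_of_le_of_lt ha hx.1

lemma flux_sub_le (h : G.IsSubrenewal s w m Z g) {a b : ℝ} (ha : 0 ≤ a) (hab : a ≤ b) :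
    G.flux w Z b - G.flux w Z a ≤ ∫ t in a..b, ∑ i, g i t := by
  have hshift : ∀ e : E, IntervalIntegrable
      (fun t => Z (G.term e) (t - -Real.log (G.r e))) volume a b := fun e => by
    have := (h.intervalIntegrable (G.term e) (a - -Real.log (G.r e))
      (b - -Real.log (G.r e))).comp_sub_right (-Real.log (G.r e))
    simpa using this
  have hint : ∀ e : E, IntervalIntegrable
      (fun t => w e * (Z (G.term e) t - Z (G.term e) (t - -Real.log (G.r e)))) volume a b :=
    fun e => ((h.intervalIntegrable _ a b).sub (hshift e)).const_mul _
  have h1 : G.flux w Z b - G.flux w Z a =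
      ∫ t in a..b, ∑ e, w e * (Z (G.term e) t - Z (G.term e) (t - -Real.log (G.r e))) := by
    rw [intervalIntegral.integral_finsetSum fun e _ => hint e, flux, flux,
      ← Finset.sum_sub_distrib]
    refine Finset.sum_congr rfl fun e _ => ?_
    rw [intervalIntegral.integral_const_mul, ← mul_sub,
      intervalIntegral.integral_sub (h.intervalIntegrable _ a b) (hshift e),
      intervalIntegral.integral_comp_sub_right (fun t => Z (G.term e) t),
      intervalIntegral.integral_interval_sub_interval_comm' (h.intervalIntegrable _ _ _)
        (h.intervalIntegrable _ _ _) (h.intervalIntegrable _ _ _)]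
  rw [h1]
  refine intervalIntegral.integral_mono_on hab ?_ (h.intervalIntegrable_sum ha hab)
    fun t _ => h.sum_sub_le t
  have := IntervalIntegrable.sum Finset.univ fun e _ => hint e
  simpa [Finset.sum_fn] using this

lemma exists_tendsto_flux (h : G.IsSubrenewal s w m Z g) :
    ∃ q, Tendsto (G.flux w Z) atTop (𝓝 q) := by
  set I : ℝ → ℝ := fun t => ∫ τ in (0 : ℝ)..t, ∑ i, g i τ with hI
  have hIlim : Tendsto I atTop (𝓝 (∫ τ in Ioi (0 : ℝ), ∑ i, g i τ)) :=
    intervalIntegral_tendsto_integral_Ioi 0 h.integrableOn_sum tendsto_id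
  set F : ℝ → ℝ := fun t => G.flux w Z (max t 0) - I (max t 0) with hF
  have hanti : Antitone F := by
    intro a b hab
    have h0 : (0 : ℝ) ≤ max a 0 := le_max_right _ _
    have hm : max a 0 ≤ max b 0 := max_le_max_right 0 hab
    have h1 := h.flux_sub_le h0 hm
    have h2 : I (max b 0) - I (max a 0) = ∫ τ in (max a 0)..(max b 0), ∑ i, g i τ :=
      intervalIntegral.integral_interval_sub_left (h.intervalIntegrable_sum le_rfl (h0.trans hm))
        (h.intervalIntegrable_sum le_rfl h0)
    simp only [hF]
    linarith
  have hbdd : BddBelow (range F) := by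
    refine ⟨-∫ τ in Ioi (0 : ℝ), ∑ i, g i τ, ?_⟩
    rintro _ ⟨t, rfl⟩
    have h1 := h.flux_nonneg (max t 0)
    have h2 : I (max t 0) ≤ ∫ τ in Ioi (0 : ℝ), ∑ i, g i τ := by
      simp only [hI]
      rw [intervalIntegral.integral_of_le (le_max_right _ _)]
      exact setIntegral_mono_set h.integrableOn_sum
        (Eventually.of_forall fun τ => Finset.sum_nonneg fun i _ => h.g_nonneg i τ)
        (LE.le.eventuallyLE fun x hx => hx.1)
    simp only [hF]
    linarith
  refine ⟨_, ((tendsto_atTop_ciInf hanti hbdd).add hIlim).congr' ?_⟩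
  filter_upwards [eventually_ge_atTop 0] with t ht
  simp [hF, max_eq_left ht]

lemma exists_eventually_le (h : G.IsSubrenewal s w m Z g) (hSC : G.StronglyConnected) (j : V) :
    ∃ B, ∀ᶠ t in atTop, Z j t ≤ B := by
  obtain ⟨q, hq⟩ := h.exists_tendsto_flux
  obtain ⟨e, rfl⟩ := G.exists_term_eq hSC j
  set l := -Real.log (G.r e) with hl
  have hlpos : 0 < l := G.neg_log_r_pos e
  have hc : 0 < w e * (l * Real.exp (-(s * l))) :=
    mul_pos (h.w_pos e) (mul_pos hlpos (Real.exp_pos _))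
  refine ⟨(q + 1) / (w e * (l * Real.exp (-(s * l)))), ?_⟩
  have hev := (tendsto_atTop_add_const_right atTop l tendsto_id).eventually
    (hq.eventually_lt_const (lt_add_one q))
  filter_upwards [hev] with t ht
  rw [le_div_iff₀ hc]
  have h1 : w e * ∫ τ in (t + l - l)..(t + l), Z (G.term e) τ ≤ G.flux w Z (t + l) :=
    Finset.single_le_sum
      (f := fun e => w e * ∫ τ in (t + l - -Real.log (G.r e))..(t + l), Z (G.term e) τ)
      (fun e _ => mul_nonneg (h.w_pos e).le (h.integral_nonneg e _)) (Finset.mem_univ e)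
  have h2 : l * (Real.exp (-(s * l)) * Z (G.term e) t) ≤
      ∫ τ in (t + l - l)..(t + l), Z (G.term e) τ := by
    have h3 := intervalIntegral.integral_mono_on (a := t + l - l) (b := t + l) (by linarith)
      (intervalIntegrable_const (c := Real.exp (-(s * l)) * Z (G.term e) t))
      (h.intervalIntegrable (G.term e) _ _)
      (fun τ hτ => h.exp_mul_le_of_le _ (by linarith [hτ.1]) hτ.2)
    have hlen : t + l - (t + l - l) = l := by ring
    rwa [intervalIntegral.integral_const, hlen, smul_eq_mul] at h3
  have h4 := mul_le_mul_of_nonneg_left h2 (h.w_pos e).le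
  simp only [id] at ht
  linarith

/-- `M` is the upper limit of `max_i Z i t` as `t → ∞`. -/
lemma exists_limsup (h : G.IsSubrenewal s w m Z g) (hSC : G.StronglyConnected) [Nonempty V] :
    ∃ M, (∀ ε > 0, ∀ᶠ t in atTop, ∀ i, Z i t ≤ M + ε) ∧
      ∀ ε > 0, ∃ᶠ t in atTop, ∃ i, M - ε < Z i t := by
  set A : Set ℝ := {a | ∀ᶠ t in atTop, ∀ i, Z i t ≤ a} with hA
  have hne : A.Nonempty := by
    choose B hB using h.exists_eventually_le hSC
    obtain ⟨b, hb⟩ := (Set.finite_range B).bddAbove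
    refine ⟨b, ?_⟩
    filter_upwards [eventually_all.2 hB] with t ht i
    exact (ht i).trans (hb ⟨i, rfl⟩)
  have hbdd : BddBelow A := by
    refine ⟨0, fun a ha => ?_⟩
    obtain ⟨t, ht⟩ := Eventually.exists ha
    exact (h.nonneg (Classical.arbitrary V) t).trans (ht _)
  refine ⟨sInf A, fun ε hε => ?_, fun ε hε => ?_⟩
  · obtain ⟨a, ha, hlt⟩ := exists_lt_of_csInf_lt hne (lt_add_of_pos_right (sInf A) hε)
    filter_upwards [ha] with t ht i
    exact (ht i).trans hlt.le
  · have hnot : sInf A - ε ∉ A := fun hmem => by linarith [csInf_le hbdd hmem]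
    have := not_eventually.1 hnot
    simpa only [not_forall, not_le] using this

lemma eventually_near_of_edge (h : G.IsSubrenewal s w m Z g) {M : ℝ}
    (hM : ∀ ε > 0, ∀ᶠ t in atTop, ∀ i, Z i t ≤ M + ε) (e : E) {η : ℝ} (hη : 0 < η) :
    ∀ᶠ δ in 𝓝[>] (0 : ℝ), ∀ᶠ t in atTop, M - δ < Z (G.init e) t →
      M - η < Z (G.term e) (t - -Real.log (G.r e)) := by
  classical
  set c := 2 * m (G.init e) + 1 with hc
  have hwm : w e ≤ m (G.init e) := by
    rw [← h.sum_out]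
    exact Finset.single_le_sum (fun e _ => (h.w_pos e).le) (by simp)
  have hwe := h.w_pos e
  have hcpos : 0 < c := by linarith
  filter_upwards [Ioo_mem_nhdsGT (show (0 : ℝ) < w e * η / c by positivity)] with δ hδ
  have hδ2 : δ * c < w e * η := (lt_div_iff₀ hcpos).1 hδ.2
  obtain ⟨T, hT⟩ := eventually_atTop.1 (hM δ hδ.1)
  obtain ⟨l, hl⟩ := (Set.finite_range fun e : E => -Real.log (G.r e)).bddAbove
  filter_upwards [eventually_ge_atTop (T + l),
    (h.g_tendsto (G.init e)).eventually_lt_const hδ.1] with t ht hgt hZ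
  have h1 := h.le (G.init e) t
  have hmem : e ∈ Finset.univ.filter fun e' => G.init e' = G.init e := by simp
  rw [← Finset.add_sum_erase _ _ hmem] at h1
  have h2 : ∑ e' ∈ (Finset.univ.filter fun e' => G.init e' = G.init e).erase e,
      w e' * Z (G.term e') (t - -Real.log (G.r e')) ≤ (m (G.init e) - w e) * (M + δ) := by
    have h3 : m (G.init e) - w e =
        ∑ e' ∈ (Finset.univ.filter fun e' => G.init e' = G.init e).erase e, w e' := by
      rw [← h.sum_out, ← Finset.add_sum_erase _ _ hmem]
      ring
    rw [h3, Finset.sum_mul]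
    refine Finset.sum_le_sum fun e' _ => mul_le_mul_of_nonneg_left (hT _ ?_ _) (h.w_pos e').le
    have : -Real.log (G.r e') ≤ l := hl ⟨e', rfl⟩
    linarith
  have hmpos : 0 < m (G.init e) := hwe.trans_le hwm
  have h4 := mul_lt_mul_of_pos_left hZ hmpos
  by_contra hcon
  have h5 := mul_le_mul_of_nonneg_left (not_lt.1 hcon) hwe.le
  have h6 : 0 ≤ w e * δ := mul_nonneg hwe.le hδ.1.le
  rw [hc] at hδ2
  nlinarith

lemma eventually_near_of_path (h : G.IsSubrenewal s w m Z g) {M : ℝ}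
    (hM : ∀ ε > 0, ∀ᶠ t in atTop, ∀ i, Z i t ≤ M + ε) {η : ℝ} (hη : 0 < η) (γ : List E) :
    ∀ i, G.IsPathFrom i γ → ∀ᶠ δ in 𝓝[>] (0 : ℝ), ∀ᶠ t in atTop, M - δ < Z i t →
      M - η < Z (G.pathTerm i γ) (t - G.pathLength γ) := by
  induction γ with
  | nil =>
    intro i _
    filter_upwards [Ioo_mem_nhdsGT hη] with δ hδ
    refine Eventually.of_forall fun t ht => ?_
    simp only [pathTerm, pathLength_nil, sub_zero]
    linarith [hδ.2]
  | cons e γ ih =>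
    rintro i ⟨rfl, hγ⟩
    obtain ⟨δ', hδ', hδ'pos⟩ := ((ih _ hγ).and self_mem_nhdsWithin).exists
    filter_upwards [h.eventually_near_of_edge hM e hδ'pos] with δ hδ
    have hshift : Tendsto (fun t => t - -Real.log (G.r e)) atTop atTop :=
      tendsto_atTop_add_const_right _ _ tendsto_id
    filter_upwards [hδ, hshift.eventually hδ'] with t h1 h2 h3
    have := h2 (h1 h3)
    rwa [sub_sub, ← pathLength_cons] at this

lemma le_of_tendsto_flux (h : G.IsSubrenewal s w m Z g) (hSC : G.StronglyConnected)
    (hGM : G.GM = Set.univ) {M q : ℝ} (hM : ∀ ε > 0, ∀ᶠ t in atTop, ∀ i, Z i t ≤ M + ε)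
    (hM' : ∀ ε > 0, ∃ᶠ t in atTop, ∃ i, M - ε < Z i t)
    (hq : Tendsto (G.flux w Z) atTop (𝓝 q)) :
    M * ∑ e, w e * -Real.log (G.r e) ≤ q := by
  have main : ∀ ε > 0, Real.exp (-(s * (2 * ε))) * (M - ε) * ∑ e, w e * -Real.log (G.r e) ≤ q := by
    intro ε hε
    choose R hR using fun p : V × V => G.exists_path_pathLength_mem_Icc hSC hGM p.1 p.2 hε
    obtain ⟨R₀, hR₀⟩ := (Set.finite_range R).bddAbove
    obtain ⟨l, hl⟩ := (Set.finite_range fun e : E => -Real.log (G.r e)).bddAbove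
    set N := ⌈l / ε⌉₊ with hN
    have hgrid : ∀ (p : V × V) (k : ℕ), R p ≤ R₀ + k * ε := fun p k =>
      (hR₀ ⟨p, rfl⟩).trans (le_add_of_nonneg_right (by positivity))
    choose γ hγ1 hγ2 hγ3 hγ4 using fun (p : V × V) (k : ℕ) => hR p _ (hgrid p k)
    have hnear : ∀ᶠ δ in 𝓝[>] (0 : ℝ), ∀ x : (V × V) × Fin (N + 1), ∀ᶠ t in atTop,
        M - δ < Z x.1.1 t → M - ε < Z x.1.2 (t - G.pathLength (γ x.1 x.2)) := by
      refine eventually_all.2 fun x => ?_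
      have := h.eventually_near_of_path hM hε (γ x.1 x.2) x.1.1 (hγ1 _ _)
      rwa [hγ2] at this
    obtain ⟨δ, hδ, hδpos⟩ := (hnear.and self_mem_nhdsWithin).exists
    have hfreq : ∃ᶠ t in atTop, Real.exp (-(s * (2 * ε))) * (M - ε) *
        ∑ e, w e * -Real.log (G.r e) ≤ G.flux w Z (t - R₀) := by
      refine ((hM' δ hδpos).and_eventually (eventually_all.2 hδ)).mono ?_
      rintro t ⟨⟨i, hi⟩, ht⟩
      have hbound : ∀ j τ, t - R₀ - l ≤ τ → τ ≤ t - R₀ →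
          Real.exp (-(s * (2 * ε))) * (M - ε) ≤ Z j τ := by
        intro j τ hτ1 hτ2
        set k := ⌈(t - R₀ - τ) / ε⌉₊ with hk
        have hkN : k ≤ N := Nat.ceil_mono (by gcongr; linarith)
        have hk1 : t - R₀ - τ ≤ k * ε := (div_le_iff₀ hε).1 (Nat.le_ceil _)
        have hk2 : k * ε ≤ t - R₀ - τ + ε := by
          have := (Nat.ceil_lt_add_one (div_nonneg (sub_nonneg.2 hτ2) hε.le)).le
          rw [← hk] at this
          calc k * ε ≤ ((t - R₀ - τ) / ε + 1) * ε := by gcongr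
            _ = t - R₀ - τ + ε := by field_simp
        have h1 := ht ((i, j), ⟨k, by omega⟩) hi
        have h2 := hγ3 (i, j) k
        have h3 := hγ4 (i, j) k
        refine le_trans (mul_le_mul_of_nonneg_left h1.le (Real.exp_pos _).le)
          (h.exp_mul_le_of_le j ?_ ?_) <;> dsimp only <;> linarith
      rw [Finset.mul_sum, flux]
      refine Finset.sum_le_sum fun e _ => ?_
      have hle : -Real.log (G.r e) ≤ l := hl ⟨e, rfl⟩
      have h3 := intervalIntegral.integral_mono_on (a := t - R₀ - -Real.log (G.r e))
        (b := t - R₀) (by linarith [G.neg_log_r_pos e])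
        (intervalIntegrable_const (c := Real.exp (-(s * (2 * ε))) * (M - ε)))
        (h.intervalIntegrable (G.term e) _ _)
        (fun τ hτ => hbound _ τ (by linarith [hτ.1]) hτ.2)
      rw [intervalIntegral.integral_const, smul_eq_mul, sub_sub_cancel] at h3
      calc Real.exp (-(s * (2 * ε))) * (M - ε) * (w e * -Real.log (G.r e))
          = w e * (-Real.log (G.r e) * (Real.exp (-(s * (2 * ε))) * (M - ε))) := by ring
        _ ≤ _ := mul_le_mul_of_nonneg_left h3 (h.w_pos e).le
    by_contra hlt
    have hshift : Tendsto (fun t => t - R₀) atTop atTop :=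
      tendsto_atTop_add_const_right _ _ tendsto_id
    obtain ⟨t, h1, h2⟩ :=
      (hfreq.and_eventually (hshift.eventually (hq.eventually_lt_const (not_le.1 hlt)))).exists
    exact absurd h1 (not_le.2 h2)
  have hcont : Tendsto (fun ε : ℝ => Real.exp (-(s * (2 * ε))) * (M - ε) *
      ∑ e, w e * -Real.log (G.r e)) (𝓝[>] 0) (𝓝 (M * ∑ e, w e * -Real.log (G.r e))) := by
    have : Continuous fun ε : ℝ => Real.exp (-(s * (2 * ε))) * (M - ε) *
        ∑ e, w e * -Real.log (G.r e) := by fun_prop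
    have h0 := this.tendsto 0
    simp only [mul_zero, neg_zero, Real.exp_zero, sub_zero, one_mul] at h0
    exact h0.mono_left nhdsWithin_le_nhds
  exact le_of_tendsto hcont (eventually_mem_nhdsWithin.mono main)

/-- **Renewal theorem** for subsolutions on a strongly connected non-lattice graph. -/
theorem exists_tendsto (h : G.IsSubrenewal s w m Z g) (hSC : G.StronglyConnected)
    (hGM : G.GM = Set.univ) [Nonempty V] : ∃ M, ∀ i, Tendsto (Z i) atTop (𝓝 M) := by
  obtain ⟨M, hM, hM'⟩ := h.exists_limsup hSC
  obtain ⟨q, hq⟩ := h.exists_tendsto_flux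
  have hMq := h.le_of_tendsto_flux hSC hGM hM hM' hq
  classical
  set μ := ∑ e, w e * -Real.log (G.r e) with hμ
  refine ⟨M, fun j => ?_⟩
  have hlower : ∀ δ > 0, ∀ᶠ t in atTop, M - δ < Z j t := by
    intro δ hδ
    by_contra hcon
    have hfreq : ∃ᶠ t in atTop, Z j t ≤ M - δ := by
      simpa only [not_lt] using not_eventually.1 hcon
    obtain ⟨e, he⟩ := G.exists_term_eq hSC j
    have hlpos := G.neg_log_r_pos e
    have hwe := h.w_pos e
    have hμpos : 0 < μ := Finset.sum_pos
      (fun e _ => mul_pos (h.w_pos e) (G.neg_log_r_pos e)) ⟨e, Finset.mem_univ e⟩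
    obtain ⟨b, hbM, hb0, hbl⟩ : ∃ b : ℝ, Real.exp (s * b) * (M - δ) < M - δ / 2 ∧ 0 < b ∧
        b < -Real.log (G.r e) := by
      have hcont : Continuous fun b : ℝ => Real.exp (s * b) * (M - δ) := by fun_prop
      have h0 := (hcont.tendsto 0).mono_left (nhdsWithin_le_nhds (s := Ioi 0))
      simp only [mul_zero, Real.exp_zero, one_mul] at h0
      obtain ⟨b, h1, h2⟩ := ((h0.eventually_lt_const (show M - δ < M - δ / 2 by linarith)).and
        (Ioo_mem_nhdsGT hlpos)).exists
      exact ⟨b, h1, h2.1, h2.2⟩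
    set η := w e * b * δ / (8 * μ) with hη
    have hηpos : 0 < η := by positivity
    have hημ : η * μ = w e * b * δ / 8 := by
      rw [hη]
      field_simp
    obtain ⟨T, hT⟩ := eventually_atTop.1 (hM η hηpos)
    obtain ⟨l, hl⟩ := (Set.finite_range fun e : E => -Real.log (G.r e)).bddAbove
    have hqη : M * μ - η * μ < q := by linarith [mul_pos hηpos hμpos]
    obtain ⟨t, ht1, ht2, ht3⟩ := (hfreq.and_eventually
      ((eventually_ge_atTop (T + l)).and (hq.eventually_const_lt hqη))).exists
    have hint : ∀ (i : V) (a c : ℝ), T ≤ a → a ≤ c →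
        ∫ τ in a..c, Z i τ ≤ (c - a) * (M + η) := by
      intro i a c ha hac
      have := intervalIntegral.integral_mono_on hac (h.intervalIntegrable i a c)
        (intervalIntegrable_const (c := M + η)) (fun τ hτ => hT τ (ha.trans hτ.1) i)
      rwa [intervalIntegral.integral_const, smul_eq_mul] at this
    have hle : ∀ e', -Real.log (G.r e') ≤ l := fun e' => hl ⟨e', rfl⟩
    have hother : ∀ e', w e' * ∫ τ in (t - -Real.log (G.r e'))..t, Z (G.term e') τ ≤
        w e' * -Real.log (G.r e') * (M + η) := by
      intro e'
      have := hint (G.term e') (t - -Real.log (G.r e')) t (by linarith [hle e'])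
        (by linarith [G.neg_log_r_pos e'])
      rw [sub_sub_cancel] at this
      rw [mul_assoc]
      exact mul_le_mul_of_nonneg_left this (h.w_pos e').le
    have hlast : ∫ τ in (t - b)..t, Z (G.term e) τ ≤ b * (M - δ / 2) := by
      have := intervalIntegral.integral_mono_on (a := t - b) (b := t) (by linarith)
        (h.intervalIntegrable (G.term e) _ _) (intervalIntegrable_const (c := M - δ / 2))
        (fun τ hτ => ?_)
      · rwa [intervalIntegral.integral_const, smul_eq_mul, sub_sub_cancel] at this
      · have h1 := h.exp_mul_le_of_le (G.term e) hτ.2 (b := b) (by linarith [hτ.1])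
        rw [he] at h1 ⊢
        calc Z j τ = Real.exp (s * b) * (Real.exp (-(s * b)) * Z j τ) := by
              rw [← mul_assoc, ← Real.exp_add]; simp
          _ ≤ Real.exp (s * b) * (M - δ) := by gcongr; exact h1.trans ht1
          _ ≤ M - δ / 2 := hbM.le
    have hthis : w e * ∫ τ in (t - -Real.log (G.r e))..t, Z (G.term e) τ ≤
        w e * -Real.log (G.r e) * (M + η) - w e * b * (δ / 2) := by
      have h1 := hint (G.term e) (t - -Real.log (G.r e)) (t - b) (by linarith [hle e])
        (by linarith)
      have h2 := intervalIntegral.integral_add_adjacent_intervals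
        (h.intervalIntegrable (G.term e) (t - -Real.log (G.r e)) (t - b))
        (h.intervalIntegrable (G.term e) (t - b) t)
      rw [← h2]
      have h3 : 0 ≤ b * η := by positivity
      calc _ ≤ w e * ((t - b - (t - -Real.log (G.r e))) * (M + η) + b * (M - δ / 2)) := by gcongr
        _ ≤ w e * (-Real.log (G.r e) * (M + η) - b * (δ / 2)) := by
            gcongr
            linarith
        _ = _ := by ring
    have hflux : G.flux w Z t ≤ μ * (M + η) - w e * b * (δ / 2) := by
      rw [flux, hμ, Finset.sum_mul, ← Finset.add_sum_erase _ _ (Finset.mem_univ e),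
        ← Finset.add_sum_erase _ _ (Finset.mem_univ e)]
      have := Finset.sum_le_sum fun e' (_ : e' ∈ Finset.univ.erase e) => hother e'
      linarith
    have : 0 < w e * b * δ := by positivity
    linarith
  rw [tendsto_order]
  refine ⟨fun a ha => ?_, fun a ha => ?_⟩
  · filter_upwards [hlower (M - a) (by linarith)] with t ht
    linarith
  · filter_upwards [hM ((a - M) / 2) (by linarith)] with t ht
    linarith [ht j]

end IsSubrenewal

end MWGraph

lemma surjective_of_dist_eq_mul {d : ℕ} {f : Pt d → Pt d} {r : ℝ} (hr : 0 < r)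
    (hf : ∀ x y, dist (f x) (f y) = r * dist x y) : Function.Surjective f := by
  have hiso : Isometry fun x => r⁻¹ • f x := by
    refine Isometry.of_dist_eq fun x y => ?_
    rw [dist_smul₀, hf, norm_inv, Real.norm_of_nonneg hr.le, inv_mul_cancel_left₀ hr.ne']
  intro y
  have hsurj : Function.Surjective hiso.affineIsometryOfStrictConvexSpace := by
    rw [← AffineIsometry.coe_toAffineMap, ← AffineMap.linear_surjective_iff]
    exact LinearMap.surjective_of_injective
      (hiso.affineIsometryOfStrictConvexSpace.linearIsometry.injective)
  obtain ⟨x, hx⟩ := hsurj (r⁻¹ • y)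
  exact ⟨x, smul_right_injective _ (inv_ne_zero hr.ne') hx⟩

/-- `F` is a finite `ρ`-separated subset of `A` whose `ρ`-neighbourhood is contained in `U`. -/
structure IsInnerPacking {d : ℕ} (A U : Set (Pt d)) (ρ : ℝ) (F : Finset (Pt d)) : Prop where
  mem : ∀ x ∈ F, x ∈ A
  closedBall_subset : ∀ x ∈ F, closedBall x ρ ⊆ U
  lt_dist : ∀ x ∈ F, ∀ y ∈ F, x ≠ y → ρ < dist x y

namespace MWGraph

variable {d : ℕ} {V E : Type} [Fintype V] [Fintype E] (G : MWGraph d V E)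

lemma S_injective (e : E) : Function.Injective (G.S e) := by
  intro x y hxy
  have := G.S_sim e x y
  rw [hxy, dist_self] at this
  exact dist_eq_zero.1 ((mul_eq_zero.1 this.symm).resolve_left (G.r_pos e).ne')

lemma closedBall_subset_image {e : E} {U : Set (Pt d)} {x : Pt d} {ρ : ℝ}
    (h : closedBall x (ρ / G.r e) ⊆ U) : closedBall (G.S e x) ρ ⊆ G.S e '' U := by
  intro y hy
  obtain ⟨z, rfl⟩ := surjective_of_dist_eq_mul (G.r_pos e) (G.S_sim e) y
  refine ⟨z, h ?_, rfl⟩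
  rw [mem_closedBall, G.S_sim] at hy
  rwa [mem_closedBall, le_div_iff₀' (G.r_pos e)]

lemma subset_inhomAttractor {C K KC : V → Set (Pt d)} (hK : G.IsAttractor K)
    (hKC : G.IsInhomAttractor C KC) (i : V) : K i ⊆ KC i := by
  rcases isEmpty_or_nonempty E with hE | hE
  · intro x hx
    rw [hK.2.2 i] at hx
    obtain ⟨e, -⟩ := mem_iUnion.1 hx
    exact hE.elim e
  obtain ⟨e₀, -, he₀⟩ := Finset.exists_max_image Finset.univ G.r Finset.univ_nonempty
  have hr0 := (G.r_pos e₀).le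
  have hB : ∃ B, ∀ i, ∀ x ∈ K i, ∃ y ∈ KC i, dist x y ≤ B := by
    choose y hy using hKC.2.1
    choose b hb using fun i => (hK.1 i).isBounded.subset_closedBall (y i)
    obtain ⟨B, hB⟩ := (Set.finite_range b).bddAbove
    exact ⟨B, fun i x hx => ⟨y i, hy i, (mem_closedBall.1 (hb i hx)).trans (hB ⟨i, rfl⟩)⟩⟩
  obtain ⟨B, hB⟩ := hB
  have hB0 : 0 ≤ B := by
    obtain ⟨x, hx⟩ := hK.2.1 i
    obtain ⟨y, -, hxy⟩ := hB i x hx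
    exact dist_nonneg.trans hxy
  have key : ∀ (n : ℕ) (i : V), ∀ x ∈ K i, ∃ y ∈ KC i, dist x y ≤ G.r e₀ ^ n * B := by
    intro n
    induction n with
    | zero => simpa using hB
    | succ n ih =>
      intro i x hx
      rw [hK.2.2 i] at hx
      obtain ⟨e, he, z, hz, rfl⟩ := mem_iUnion₂.1 hx
      obtain ⟨y, hy, hzy⟩ := ih _ z hz
      refine ⟨G.S e y, ?_, ?_⟩
      · rw [hKC.2.2 i]
        exact Or.inl (mem_iUnion₂.2 ⟨e, he, y, hy, rfl⟩)
      · rw [G.S_sim, pow_succ', mul_assoc]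
        exact mul_le_mul (he₀ e (Finset.mem_univ e)) hzy dist_nonneg hr0
  intro x hx
  rw [← (hKC.1 i).isClosed.closure_eq, Metric.mem_closure_iff]
  intro ε hε
  have hlim : Tendsto (fun n : ℕ => G.r e₀ ^ n * B) atTop (𝓝 0) := by
    simpa using (tendsto_pow_atTop_nhds_zero_of_lt_one hr0 (G.r_lt_one e₀)).mul_const B
  obtain ⟨n, hn⟩ := (hlim.eventually_lt_const hε).exists
  obtain ⟨y, hy, hxy⟩ := key n i x hx
  exact ⟨y, hy, hxy.trans_lt hn⟩

variable [DecidableEq V]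

lemma exists_isInnerPacking_step {A U : V → Set (Pt d)} (hU : G.IsOSCWith U) {i : V} {ρ : ℝ}
    (hρ : 0 < ρ) (hA : ∀ e, G.init e = i → G.S e '' A (G.term e) ⊆ A i) (F : E → Finset (Pt d))
    (hF : ∀ e, IsInnerPacking (A (G.term e)) (U (G.term e)) (ρ / G.r e) (F e)) :
    ∃ F' : Finset (Pt d), IsInnerPacking (A i) (U i) ρ F' ∧
      F'.card = ∑ e with G.init e = i, (F e).card := by
  classical
  have hball : ∀ e, ∀ x ∈ F e, closedBall (G.S e x) ρ ⊆ G.S e '' U (G.term e) := fun e x hx =>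
    G.closedBall_subset_image ((hF e).closedBall_subset x hx)
  have hcenter : ∀ e, ∀ x ∈ F e, G.S e x ∈ G.S e '' U (G.term e) := fun e x hx =>
    hball e x hx (mem_closedBall_self hρ.le)
  refine ⟨(Finset.univ.filter fun e => G.init e = i).biUnion fun e => (F e).image (G.S e),
    ⟨?_, ?_, ?_⟩, ?_⟩
  · intro x hx
    simp only [Finset.mem_biUnion, Finset.mem_filter, Finset.mem_univ, true_and,
      Finset.mem_image] at hx
    obtain ⟨e, he, y, hy, rfl⟩ := hx
    exact hA e he ⟨y, (hF e).mem y hy, rfl⟩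
  · intro x hx
    simp only [Finset.mem_biUnion, Finset.mem_filter, Finset.mem_univ, true_and,
      Finset.mem_image] at hx
    obtain ⟨e, he, y, hy, rfl⟩ := hx
    exact (hball e y hy).trans fun z hz => hU.2.2.2.2.1 i (mem_iUnion₂.2 ⟨e, he, hz⟩)
  · intro x hx y hy hxy
    simp only [Finset.mem_biUnion, Finset.mem_filter, Finset.mem_univ, true_and,
      Finset.mem_image] at hx hy
    obtain ⟨e, he, x, hx, rfl⟩ := hx
    obtain ⟨e', he', y, hy, rfl⟩ := hy
    rcases eq_or_ne e e' with rfl | hne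
    · have := (hF e).lt_dist x hx y hy fun h => hxy (h ▸ rfl)
      rwa [G.S_sim, ← div_lt_iff₀' (G.r_pos e)]
    · by_contra hle
      rw [not_lt, dist_comm] at hle
      exact (hU.2.2.2.2.2 e e' (he.trans he'.symm) hne).le_bot
        ⟨hball e x hx (mem_closedBall.2 hle), hcenter e' y hy⟩
  · rw [Finset.card_biUnion]
    · exact Finset.sum_congr rfl fun e _ => Finset.card_image_of_injective _ (G.S_injective e)
    · intro e he e' he' hne
      refine Finset.disjoint_left.2 ?_
      intro z hz hz'
      obtain ⟨x, hx, rfl⟩ := Finset.mem_image.1 hz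
      obtain ⟨y, hy, hxy⟩ := Finset.mem_image.1 hz'
      refine (hU.2.2.2.2.2 e e' ((Finset.mem_filter.1 (Finset.mem_coe.1 he)).2.trans
        (Finset.mem_filter.1 (Finset.mem_coe.1 he')).2.symm) hne).le_bot ⟨hcenter e x hx, ?_⟩
      rw [← hxy]
      exact hcenter e' y hy

lemma exists_isInnerPacking {A U : V → Set (Pt d)} (hU : G.IsOSCWith U)
    (hA : ∀ e, G.S e '' A (G.term e) ⊆ A (G.init e)) (hUA : ∀ i, (U i ∩ A i).Nonempty)
    (s : ℝ) (hs : 0 ≤ s) {u : V → ℝ} (hu : ∀ i, 0 < u i)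
    (hu1 : ∀ i, ∑ e with G.init e = i, G.r e ^ s * u (G.term e) = u i) [Nonempty E] :
    ∃ c > 0, ∃ T, ∀ t, T ≤ t → ∀ i, ∃ F : Finset (Pt d),
      IsInnerPacking (A i) (U i) (Real.exp (-t)) F ∧ c * u i * Real.exp (s * t) ≤ F.card := by
  have hbase : ∀ i, ∃ x ∈ A i, ∀ᶠ t in atTop, closedBall x (Real.exp (-t)) ⊆ U i := by
    intro i
    obtain ⟨x, hxU, hxA⟩ := hUA i
    obtain ⟨ε, hε, hball⟩ := Metric.nhds_basis_closedBall.mem_iff.1 ((hU.2.1 i).mem_nhds hxU)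
    refine ⟨x, hxA, ?_⟩
    filter_upwards [Real.tendsto_exp_neg_atTop_nhds_zero.eventually_lt_const hε] with t ht
    exact (closedBall_subset_closedBall ht.le).trans hball
  choose x hxA hx using hbase
  obtain ⟨T, hT⟩ := eventually_atTop.1 (eventually_all.2 hx)
  obtain ⟨b, hb⟩ := (Set.finite_range fun e : E => -Real.log (G.r e)).bddAbove
  have hb : ∀ e, -Real.log (G.r e) ≤ b := fun e => hb ⟨e, rfl⟩
  obtain ⟨e₀, -, he₀⟩ := Finset.exists_min_image Finset.univ (fun e : E => -Real.log (G.r e))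
    Finset.univ_nonempty
  set a := -Real.log (G.r e₀) with ha
  have hapos : 0 < a := G.neg_log_r_pos e₀
  have husum : ∀ i, u i ≤ ∑ j, u j := fun i =>
    Finset.single_le_sum (fun j _ => (hu j).le) (Finset.mem_univ i)
  have hσ : 0 < ∑ j, u j := (hu (G.init e₀)).trans_le (husum _)
  set c := Real.exp (-(s * (T + b))) / ∑ j, u j with hc
  have hcpos : 0 < c := div_pos (Real.exp_pos _) hσ
  have key : ∀ (n : ℕ) (t : ℝ), T ≤ t → t ≤ T + b + n * a → ∀ i, ∃ F : Finset (Pt d),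
      IsInnerPacking (A i) (U i) (Real.exp (-t)) F ∧ c * u i * Real.exp (s * t) ≤ F.card := by
    intro n
    induction n with
    | zero =>
      intro t ht1 ht2 i
      refine ⟨{x i}, ⟨by simpa using hxA i, by simpa using hT t ht1 i, by simp⟩, ?_⟩
      have h1 : Real.exp (s * t) ≤ Real.exp (s * (T + b)) :=
        Real.exp_le_exp.2 (mul_le_mul_of_nonneg_left (by simpa using ht2) hs)
      calc c * u i * Real.exp (s * t)
          ≤ c * (∑ j, u j) * Real.exp (s * (T + b)) := by gcongr; exact husum i
        _ = 1 := by
            rw [hc, div_mul_cancel₀ _ hσ.ne', ← Real.exp_add]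
            simp
        _ = _ := by simp
    | succ n ih =>
      intro t ht1 ht2 i
      rcases le_or_gt t (T + b) with htb | htb
      · exact ih t ht1 (htb.trans (le_add_of_nonneg_right (by positivity))) i
      push_cast at ht2
      have hstep : ∀ e, ∃ F : Finset (Pt d), IsInnerPacking (A (G.term e)) (U (G.term e))
          (Real.exp (-t) / G.r e) F ∧
          c * u (G.term e) * Real.exp (s * (t - -Real.log (G.r e))) ≤ F.card := by
        intro e
        have h1 : a ≤ -Real.log (G.r e) := he₀ e (Finset.mem_univ e)
        have h2 : Real.exp (-t) / G.r e = Real.exp (-(t - -Real.log (G.r e))) := by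
          rw [sub_neg_eq_add, neg_add, Real.exp_add, Real.exp_neg (Real.log _),
            Real.exp_log (G.r_pos e), div_eq_mul_inv]
        rw [h2]
        exact ih _ (by linarith [hb e]) (by linarith) _
      choose F hF hcard using hstep
      obtain ⟨F', hF', hF'card⟩ := G.exists_isInnerPacking_step hU (Real.exp_pos (-t))
        (fun e he => he ▸ hA e) F hF
      refine ⟨F', hF', ?_⟩
      rw [hF'card]
      push_cast
      rw [← hu1 i, Finset.mul_sum, Finset.sum_mul]
      refine Finset.sum_le_sum fun e _ => le_trans (le_of_eq ?_) (hcard e)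
      rw [sub_neg_eq_add, mul_add, Real.exp_add, Real.rpow_def_of_pos (G.r_pos e),
        mul_comm (Real.log _) s]
      ring
  refine ⟨c, hcpos, T, fun t ht => ?_⟩
  obtain ⟨n, hn⟩ := exists_nat_ge ((t - (T + b)) / a)
  rw [div_le_iff₀ hapos] at hn
  exact key n t ht (by linarith)

/-- Under the strong open set condition the covering numbers grow at least like `e^{st}`. -/
lemma exists_le_coveringNumber {A U : V → Set (Pt d)} (hU : G.IsOSCWith U)
    (hAc : ∀ i, IsCompact (A i))
    (hA : ∀ e, G.S e '' A (G.term e) ⊆ A (G.init e)) (hUA : ∀ i, (U i ∩ A i).Nonempty)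
    (s : ℝ) (hs : 0 ≤ s) {u : V → ℝ} (hu : ∀ i, 0 < u i)
    (hu1 : ∀ i, ∑ e with G.init e = i, G.r e ^ s * u (G.term e) = u i) [Nonempty E] :
    ∃ c > 0, ∀ᶠ t in atTop, ∀ i,
      c * u i * Real.exp (s * t) ≤ coveringNumber (A i) (Real.exp (-t)) := by
  obtain ⟨c, hc, T, hT⟩ := G.exists_isInnerPacking hU hA hUA s hs hu hu1
  refine ⟨c * Real.exp (-(s * Real.log 2)), by positivity, ?_⟩
  filter_upwards [eventually_ge_atTop (T + Real.log 2)] with t ht i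
  obtain ⟨F, hF, hcard⟩ := hT (t - Real.log 2) (by linarith) i
  have h2 : Real.exp (-(t - Real.log 2)) = 2 * Real.exp (-t) := by
    rw [neg_sub, sub_eq_add_neg, Real.exp_add, Real.exp_log two_pos]
  rw [h2] at hF
  have h3 := card_le_coveringNumber (hAc i) (Real.exp_pos (-t)) F hF.mem hF.lt_dist
  refine le_trans (le_of_eq ?_) (hcard.trans (Nat.cast_le.2 h3))
  rw [mul_sub, sub_eq_add_neg, Real.exp_add]
  ring

end MWGraph

/-- An integrable function that cannot decrease faster than `e^{-st}` tends to zero. -/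
lemma tendsto_zero_of_integrableOn_of_monotone_exp_mul {f : ℝ → ℝ} {s : ℝ} (hs : 0 ≤ s)
    (hf : ∀ t, 0 ≤ f t) (hmono : Monotone fun t => Real.exp (s * t) * f t)
    (hint : IntegrableOn f (Ioi 0)) : Tendsto f atTop (𝓝 0) := by
  have hlim := intervalIntegral_tendsto_integral_Ioi 0 hint tendsto_id
  have hlim' := hlim.comp (tendsto_atTop_add_const_right atTop (1 : ℝ) tendsto_id)
  have hdiff := (hlim'.sub hlim).const_mul (Real.exp s)
  rw [sub_self, mul_zero] at hdiff
  refine tendsto_of_tendsto_of_tendsto_of_le_of_le' tendsto_const_nhds hdiff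
    (Eventually.of_forall hf) ?_
  filter_upwards [eventually_ge_atTop 0] with t ht
  have hii : ∀ a b : ℝ, 0 ≤ a → a ≤ b → IntervalIntegrable f volume a b := fun a b ha hab => by
    rw [intervalIntegrable_iff_integrableOn_Ioc_of_le hab]
    exact hint.mono_set fun x hx => lt_of_le_of_lt ha hx.1
  simp only [Function.comp, id]
  rw [intervalIntegral.integral_interval_sub_left (hii 0 (t + 1) le_rfl (by linarith))
    (hii 0 t le_rfl ht)]
  have hle := intervalIntegral.integral_mono_on (a := t) (b := t + 1) (by linarith)
    (intervalIntegrable_const (c := Real.exp (-s) * f t)) (hii t (t + 1) ht (by linarith))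
    (fun τ hτ => ?_)
  · rw [intervalIntegral.integral_const, add_sub_cancel_left, one_smul] at hle
    calc f t = Real.exp s * (Real.exp (-s) * f t) := by
          rw [← mul_assoc, ← Real.exp_add]; simp
      _ ≤ _ := by gcongr
  · have h1 : Real.exp (s * t) * f t ≤ Real.exp (s * τ) * f τ := hmono hτ.1
    have h2 : Real.exp (s * τ) ≤ Real.exp (s * t + s) :=
      Real.exp_le_exp.2 (by nlinarith [hτ.2])
    have h3 : Real.exp (s * t) * f t ≤ Real.exp (s * t) * (Real.exp s * f τ) := by
      rw [← mul_assoc, ← Real.exp_add]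
      exact h1.trans (mul_le_mul_of_nonneg_right h2 (hf τ))
    have h4 := le_of_mul_le_mul_left h3 (Real.exp_pos _)
    calc Real.exp (-s) * f t ≤ Real.exp (-s) * (Real.exp s * f τ) := by gcongr
      _ = f τ := by rw [← mul_assoc, ← Real.exp_add]; simp

lemma coveringNumber_exp_neg_mono {d : ℕ} {A : Set (Pt d)} (hA : IsCompact A) :
    Monotone fun t : ℝ => (coveringNumber A (Real.exp (-t)) : ℝ) := fun _ _ h =>
  Nat.cast_le.2 (coveringNumber_anti hA (Real.exp_pos _) (Real.exp_le_exp.2 (neg_le_neg h)))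

theorem stmt0 {d : ℕ} {V E : Type} [Fintype V] [Fintype E] [DecidableEq V]
    (G : MWGraph d V E) (hSC : G.StronglyConnected)
    (C K KC U : V → Set (Pt d))
    (hC : G.IsCondensation C) (hK : G.IsAttractor K) (hKC : G.IsInhomAttractor C KC)
    (hU : G.IsOSCWith U) (hUK : ∀ i, (U i ∩ K i).Nonempty)
    (hCU : ∀ i, C i ⊆ closure (U i))
    (s0 : ℝ) (hs0 : IsS0 G s0)
    (hint : ∀ i : V, ∫⁻ t in Set.Ioi (0 : ℝ),
      ENNReal.ofReal (Real.exp (-s0 * t) * (coveringNumber (C i) (Real.exp (-t)) : ℝ)) < ⊤)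
    (hGM : G.GM = Set.univ) :
    ∀ i : V, ∃ h : ℝ, 0 < h ∧
      Tendsto (fun t : ℝ => (coveringNumber (KC i) (Real.exp (-t)) : ℝ) /
        (h * Real.exp (s0 * t))) atTop (𝓝 1) := by
  intro i₀
  have : Nonempty V := ⟨i₀⟩
  have : Nonempty E := ⟨(G.exists_term_eq hSC i₀).choose⟩
  obtain ⟨hs, hρ⟩ := hs0
  have hA := G.Amatrix_nonneg s0
  have hirr := G.exists_Amatrix_pow_pos hSC s0
  obtain ⟨u, hu, hAu⟩ := exists_pos_right_eigenvector hA hirr hρ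
  obtain ⟨v, hv, hvA⟩ := exists_pos_left_eigenvector hA hirr hu hAu
  have hout : ∀ i, ∑ e with G.init e = i, G.r e ^ s0 * u (G.term e) = u i := by
    intro i
    conv_rhs => rw [← hAu]
    simp only [Matrix.mulVec, dotProduct, MWGraph.Amatrix, Matrix.of_apply, Finset.sum_mul]
    rw [Finset.sum_comm, Finset.sum_filter]
    refine Finset.sum_congr rfl fun e _ => ?_
    split_ifs with h <;> simp [h]
  have hin : ∀ j, ∑ e with G.term e = j, v (G.init e) * G.r e ^ s0 = v j := by
    intro j
    conv_rhs => rw [← hvA]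
    simp only [Matrix.vecMul, dotProduct, MWGraph.Amatrix, Matrix.of_apply, Finset.mul_sum]
    rw [Finset.sum_comm, Finset.sum_filter]
    refine Finset.sum_congr rfl fun e _ => ?_
    split_ifs with h <;> simp [h]
  set Z : V → ℝ → ℝ := fun i t =>
    Real.exp (-s0 * t) * coveringNumber (KC i) (Real.exp (-t)) / u i with hZ
  set f : V → ℝ → ℝ := fun i t =>
    Real.exp (-s0 * t) * coveringNumber (C i) (Real.exp (-t)) with hf
  have hexp : ∀ t, Real.exp (s0 * t) * Real.exp (-s0 * t) = 1 := fun t => by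
    rw [← Real.exp_add]
    simp
  have hfmono : ∀ i, Monotone fun t => Real.exp (s0 * t) * f i t := fun i => by
    simpa only [hf, ← mul_assoc, hexp, one_mul] using coveringNumber_exp_neg_mono (hC i).1
  have hf0 : ∀ i t, 0 ≤ f i t := fun i t => by positivity
  have hfint : ∀ i, IntegrableOn (f i) (Ioi 0) := fun i => by
    have hmeas : Measurable (f i) :=
      (by fun_prop : Measurable fun t : ℝ => Real.exp (-s0 * t)).mul
        (coveringNumber_exp_neg_mono (hC i).1).measurable
    refine ⟨hmeas.aestronglyMeasurable, ?_⟩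
    rw [hasFiniteIntegral_iff_ofReal (Eventually.of_forall (hf0 i))]
    exact hint i
  have hren : G.IsSubrenewal s0 (fun e => v (G.init e) * G.r e ^ s0 * u (G.term e))
      (fun i => v i * u i) Z (fun i t => v i * f i t) :=
    { s_nonneg := hs
      w_pos := fun e => mul_pos (mul_pos (hv _) (Real.rpow_pos_of_pos (G.r_pos e) _)) (hu _)
      sum_out := fun i => by
        rw [← hout i, Finset.mul_sum]
        refine Finset.sum_congr rfl fun e he => ?_
        rw [(Finset.mem_filter.1 he).2, mul_assoc]
      sum_in := fun i => by
        rw [← hin i, Finset.sum_mul]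
        refine Finset.sum_congr rfl fun e he => ?_
        rw [(Finset.mem_filter.1 he).2]
      nonneg := fun i t => div_nonneg (by positivity) (hu i).le
      mono := fun i => by
        simpa only [hZ, mul_div_assoc', ← mul_assoc, hexp, one_mul] using
          (coveringNumber_exp_neg_mono (hKC.1 i)).div_const (hu i).le
      le := fun i t => by
        have h1 : (coveringNumber (KC i) (Real.exp (-t)) : ℝ) ≤
            ∑ e with G.init e = i,
              (coveringNumber (KC (G.term e)) (Real.exp (-t) / G.r e) : ℝ) +
              coveringNumber (C i) (Real.exp (-t)) := by
          exact_mod_cast G.coveringNumber_inhom_le hC hKC i (Real.exp_pos (-t))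
        have h2 : v i * u i * Z i t =
            v i * Real.exp (-s0 * t) * coveringNumber (KC i) (Real.exp (-t)) := by
          have := (hu i).ne'
          simp only [hZ]
          field_simp
        have h3 : ∀ e ∈ Finset.univ.filter (fun e => G.init e = i),
            v (G.init e) * G.r e ^ s0 * u (G.term e) *
              Z (G.term e) (t - -Real.log (G.r e)) =
            v i * Real.exp (-s0 * t) *
              coveringNumber (KC (G.term e)) (Real.exp (-t) / G.r e) := by
          intro e he
          have h4 : Real.exp (-(t - -Real.log (G.r e))) = Real.exp (-t) / G.r e := by
            rw [sub_neg_eq_add, neg_add, Real.exp_add, Real.exp_neg (Real.log _),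
              Real.exp_log (G.r_pos e), div_eq_mul_inv]
          have h5 : G.r e ^ s0 * Real.exp (-s0 * (t - -Real.log (G.r e))) =
              Real.exp (-s0 * t) := by
            rw [Real.rpow_def_of_pos (G.r_pos e), ← Real.exp_add]
            congr 1
            ring
          have := (hu (G.term e)).ne'
          simp only [hZ]
          rw [h4, (Finset.mem_filter.1 he).2, ← h5]
          field_simp
        rw [h2, Finset.sum_congr rfl h3, ← Finset.mul_sum]
        have h6 := mul_le_mul_of_nonneg_left h1
          (mul_pos (hv i) (Real.exp_pos (-s0 * t))).le
        simp only [hf]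
        linarith
      g_nonneg := fun i t => mul_nonneg (hv i).le (hf0 i t)
      g_integrable := fun i => (hfint i).const_mul (v i)
      g_tendsto := fun i => by
        simpa using (tendsto_zero_of_integrableOn_of_monotone_exp_mul hs (hf0 i) (hfmono i)
          (hfint i)).const_mul (v i) }
  obtain ⟨M, hM⟩ := hren.exists_tendsto hSC hGM
  have hinv : ∀ e, G.S e '' KC (G.term e) ⊆ KC (G.init e) := fun e x hx => by
    rw [hKC.2.2 (G.init e)]
    exact Or.inl (mem_iUnion₂.2 ⟨e, rfl, hx⟩)
  obtain ⟨c, hc, hlow⟩ := G.exists_le_coveringNumber hU hKC.1 hinv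
    (fun i => (hUK i).mono (inter_subset_inter_right _ (G.subset_inhomAttractor hK hKC i)))
    s0 hs hu hout
  have hMpos : 0 < M := by
    refine hc.trans_le (ge_of_tendsto (hM i₀) ?_)
    filter_upwards [hlow] with t ht
    have h1 := mul_le_mul_of_nonneg_left (ht i₀) (Real.exp_pos (-s0 * t)).le
    simp only [hZ]
    rw [le_div_iff₀ (hu i₀)]
    calc c * u i₀ = c * u i₀ * (Real.exp (s0 * t) * Real.exp (-s0 * t)) := by
          rw [hexp, mul_one]
      _ ≤ _ := by linarith
  refine ⟨u i₀ * M, mul_pos (hu i₀) hMpos, ?_⟩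
  have hlim := (hM i₀).div_const M
  rw [div_self hMpos.ne'] at hlim
  refine hlim.congr fun t => ?_
  have h1 : Real.exp (-s0 * t) = (Real.exp (s0 * t))⁻¹ := by
    rw [← Real.exp_neg, neg_mul]
  simp only [hZ, h1]
  have := (hu i₀).ne'
  have := (Real.exp_pos (s0 * t)).ne'
  field_simp
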